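/- Let 0 < ε < 1, set r_ε = 1 − ε and t_ε = φ(r_ε). Let 0 ≤ r < r_ε and 0 < τ < φ(r) − t_ε. If s > 1 satisfies s²·(φ(r/s) − φ(r_ε/s)) = φ(r) − τ − t_ε, then s ≥ 1 + (√ε/2)·τ and consequently 1 − 1/s ≥ (√ε/4)·τ. -/

import Mathlib

/-!
Since `φ'(x) = -2x²/√(1 - x²)`, the defining equation of `s` says
`τ = ∫_r^{1-ε} 2x² (1/√(1 - x²) - 1/√(s² - x²)) dx`.
The integrand is at most `2(s - 1)/(1 - x²)^{3/2}` (`gap_integrand_bound`), which has the primitive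
`2(s - 1) x/√(1 - x²)`. At `x = 1 - ε` this is at most `2(s - 1)/√ε`, because
`1 - (1 - ε)² = ε(2 - ε) ≥ ε`; hence `τ ≤ 2(s - 1)/√ε`, the first claim. In place of integrals, the
proof uses that `φ(x) - s² φ(x/s) + 2(s - 1) x/√(1 - x²)` is monotone.

For the second claim, `1 - 1/s ≥ (s - 1)/2` if `s ≤ 2`; if `s > 2` then `1 - 1/s > 1/2`, while
`τ < φ(r) ≤ π/2 < 2`.
-/

noncomputable section

/-- The profile function `φ(r) = arccos r + r √(1 - r²)`. -/
def phi (r : ℝ) : ℝ := Real.arccos r + r * Real.sqrt (1 - r ^ 2)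

theorem hasDerivAt_phi {x : ℝ} (h0 : -1 < x) (h1 : x < 1) :
    HasDerivAt phi (-2 * x ^ 2 / Real.sqrt (1 - x ^ 2)) x := by
  have hpos : 0 < 1 - x ^ 2 := by nlinarith
  have ha : 0 < Real.sqrt (1 - x ^ 2) := Real.sqrt_pos.2 hpos
  have hsq := Real.sq_sqrt hpos.le
  have h2 : HasDerivAt (fun y : ℝ => 1 - y ^ 2) (-(2 * x)) x := by
    simpa using (hasDerivAt_pow 2 x).const_sub 1
  have h : HasDerivAt phi _ x := (Real.hasDerivAt_arccos h0.ne' h1.ne).add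
    ((hasDerivAt_id x).mul (h2.sqrt hpos.ne'))
  refine h.congr_deriv ?_
  simp only [id]
  field_simp
  rw [hsq]
  ring

theorem hasDerivAt_div_sqrt {x : ℝ} (h0 : -1 < x) (h1 : x < 1) :
    HasDerivAt (fun y : ℝ => y / Real.sqrt (1 - y ^ 2)) (1 / Real.sqrt (1 - x ^ 2) ^ 3) x := by
  have hpos : 0 < 1 - x ^ 2 := by nlinarith
  have ha : 0 < Real.sqrt (1 - x ^ 2) := Real.sqrt_pos.2 hpos
  have hsq := Real.sq_sqrt hpos.le
  have h2 : HasDerivAt (fun y : ℝ => 1 - y ^ 2) (-(2 * x)) x := by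
    simpa using (hasDerivAt_pow 2 x).const_sub 1
  have h := (hasDerivAt_id x).div (h2.sqrt hpos.ne') ha.ne'
  refine h.congr_deriv ?_
  simp only [id]
  field_simp
  rw [hsq]
  ring

/-- The integrand estimate, with `a = √(1 - x²)` and `c = √(s² - x²)`: it reduces to
`(c - a)(c + a) = s² - 1` and `c ≥ s a`. -/
theorem gap_integrand_bound {x s a c : ℝ} (hs : 1 < s) (ha : 0 < a) (hc : 0 < c)
    (ha2 : a ^ 2 = 1 - x ^ 2) (hc2 : c ^ 2 = s ^ 2 - x ^ 2) :
    x ^ 2 / a - x ^ 2 / c ≤ (s - 1) / a ^ 3 := by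
  have hca : s * a ≤ c := by
    apply (pow_le_pow_iff_left₀ (by positivity) hc.le two_ne_zero).1
    nlinarith [mul_nonneg (sq_nonneg x) (by nlinarith : (0:ℝ) ≤ s ^ 2 - 1)]
  have hac : a ≤ c := by nlinarith
  have hx1 : x ^ 2 ≤ 1 := by nlinarith
  have h1 : x ^ 2 / a - x ^ 2 / c ≤ (c - a) / (a * c) := by
    rw [div_sub_div _ _ ha.ne' hc.ne']
    apply div_le_div_of_nonneg_right _ (by positivity)
    nlinarith
  refine h1.trans ?_
  rw [div_le_div_iff₀ (by positivity) (by positivity)]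
  have hd : (c - a) * (c + a) = (s - 1) * (s + 1) := by nlinarith
  have h3 : (s + 1) * a ≤ c + a := by nlinarith
  have h4 : (c - a) * a ≤ s - 1 := by
    have : (c - a) * ((s + 1) * a) ≤ (c - a) * (c + a) :=
      mul_le_mul_of_nonneg_left h3 (by linarith)
    nlinarith
  have h5 : a * a ≤ a * c := mul_le_mul_of_nonneg_left hac ha.le
  calc (c - a) * a ^ 3 = ((c - a) * a) * (a * a) := by ring
    _ ≤ (s - 1) * (a * c) := mul_le_mul h4 h5 (by positivity) (by linarith)

theorem phi_gap_monotoneOn {s R : ℝ} (hs : 1 < s) (hR : R < 1) :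
    MonotoneOn (fun x => phi x - s ^ 2 * phi (x / s)
      + 2 * (s - 1) * (x / Real.sqrt (1 - x ^ 2))) (Set.Icc 0 R) := by
  have hs0 : 0 < s := by linarith
  have key : ∀ x ∈ Set.Icc 0 R, HasDerivAt (fun x => phi x - s ^ 2 * phi (x / s)
      + 2 * (s - 1) * (x / Real.sqrt (1 - x ^ 2)))
      (-2 * x ^ 2 / Real.sqrt (1 - x ^ 2)
        - s ^ 2 * (-2 * (x / s) ^ 2 / Real.sqrt (1 - (x / s) ^ 2) * (1 / s))
        + 2 * (s - 1) * (1 / Real.sqrt (1 - x ^ 2) ^ 3)) x := by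
    rintro x ⟨h0, h1⟩
    have hx1 : x / s < 1 := by rw [div_lt_one hs0]; linarith
    have hx0 : 0 ≤ x / s := by positivity
    have hp := (hasDerivAt_phi (by linarith) hx1).comp x ((hasDerivAt_id x).div_const s)
    exact ((hasDerivAt_phi (by linarith) (by linarith)).sub (hp.const_mul (s ^ 2))).add
      ((hasDerivAt_div_sqrt (by linarith) (by linarith)).const_mul (2 * (s - 1)))
  refine monotoneOn_of_hasDerivWithinAt_nonneg (convex_Icc 0 R)
    (fun x hx => (key x hx).continuousAt.continuousWithinAt)
    (fun x hx => (key x (interior_subset hx)).hasDerivWithinAt) ?_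
  intro x hx
  obtain ⟨h0, h1⟩ := interior_subset hx
  have hx1 : x / s < 1 := by rw [div_lt_one hs0]; linarith
  have hx0 : 0 ≤ x / s := by positivity
  have hpa : 0 < 1 - x ^ 2 := by nlinarith
  have hpb : 0 < 1 - (x / s) ^ 2 := by nlinarith
  have ha := Real.sqrt_pos.2 hpa
  have hb := Real.sqrt_pos.2 hpb
  have hb2 := Real.sq_sqrt hpb.le
  have hB := gap_integrand_bound hs ha (mul_pos hs0 hb) (Real.sq_sqrt hpa.le) (x := x)
    (by rw [mul_pow, hb2]; field_simp)
  have e : s ^ 2 * (-2 * (x / s) ^ 2 / Real.sqrt (1 - (x / s) ^ 2) * (1 / s))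
      = -2 * (x ^ 2 / (s * Real.sqrt (1 - (x / s) ^ 2))) := by
    generalize Real.sqrt (1 - (x / s) ^ 2) = b at hb
    field_simp
  rw [e]
  calc (0:ℝ) ≤ 2 * ((s - 1) / Real.sqrt (1 - x ^ 2) ^ 3 - (x ^ 2 / Real.sqrt (1 - x ^ 2)
        - x ^ 2 / (s * Real.sqrt (1 - (x / s) ^ 2)))) := by linarith
    _ = _ := by ring

theorem phi_le_pi_div_two {r : ℝ} (h0 : 0 ≤ r) (h1 : r ≤ 1) : phi r ≤ Real.pi / 2 := by
  have h2 : r ≤ Real.arcsin r := by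
    have := Real.sin_le (Real.arcsin_nonneg.2 h0)
    rwa [Real.sin_arcsin (by linarith) h1] at this
  have h3 : Real.sqrt (1 - r ^ 2) ≤ 1 := by
    rw [Real.sqrt_le_one]; nlinarith
  unfold phi
  rw [Real.arccos]
  nlinarith

/-- Curvature gap estimate in the case `0 < ε < 1`: if the leaf of parameter
`s` passes through `(z, φ(|z|) - τ)` with `|z| = r`, then
`s ≥ 1 + (√ε/2) τ`, hence `1 - 1/s ≥ (√ε/4) τ`. -/
theorem curvature_gap_eps_pos (ε r τ s : ℝ)
    (hε0 : 0 < ε) (hε1 : ε < 1)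
    (hr0 : 0 ≤ r) (hr1 : r < 1 - ε)
    (hτ0 : 0 < τ) (hτ1 : τ < phi r - phi (1 - ε))
    (hs : 1 < s)
    (heq : s ^ 2 * (phi (r / s) - phi ((1 - ε) / s)) = phi r - τ - phi (1 - ε)) :
    1 + (Real.sqrt ε / 2) * τ ≤ s ∧ (Real.sqrt ε / 4) * τ ≤ 1 - 1 / s := by
  have hs0 : 0 < s := by linarith
  have he := Real.sqrt_pos.2 hε0
  have hm := phi_gap_monotoneOn hs (by linarith : 1 - ε < 1) ⟨hr0, hr1.le⟩
    ⟨by linarith, le_rfl⟩ hr1.le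
  simp only at hm
  have hg0 : 0 ≤ r / Real.sqrt (1 - r ^ 2) := by positivity
  have hgR : (1 - ε) / Real.sqrt (1 - (1 - ε) ^ 2) ≤ 1 / Real.sqrt ε := by
    have : Real.sqrt ε ≤ Real.sqrt (1 - (1 - ε) ^ 2) := Real.sqrt_le_sqrt (by nlinarith)
    exact div_le_div₀ (by norm_num) (by linarith) he this
  have hτ : τ ≤ 2 * (s - 1) * (1 / Real.sqrt ε) := by
    have h1 := mul_le_mul_of_nonneg_left hgR (by linarith : 0 ≤ 2 * (s - 1))
    have h2 := mul_nonneg (by linarith : 0 ≤ 2 * (s - 1)) hg0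
    linarith
  have hA : Real.sqrt ε * τ ≤ 2 * (s - 1) := by
    rw [mul_one_div, le_div_iff₀ he] at hτ
    linarith
  refine ⟨by linarith, ?_⟩
  have hcases : Real.sqrt ε / 4 * τ * s ≤ s - 1 := by
    rcases le_or_gt s 2 with h2 | h2
    · nlinarith [mul_pos he hτ0]
    · have hτ2 : τ ≤ 2 := by
        have h3 := phi_le_pi_div_two hr0 (by linarith)
        have h4 : 0 ≤ phi (1 - ε) :=
          add_nonneg (Real.arccos_nonneg _) (mul_nonneg (by linarith) (Real.sqrt_nonneg _))
        linarith [Real.pi_le_four]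
      have he1 : Real.sqrt ε ≤ 1 := Real.sqrt_le_one.2 hε1.le
      have h5 : Real.sqrt ε * τ ≤ 2 := by nlinarith
      nlinarith
  rw [one_sub_div hs0.ne', le_div_iff₀ hs0]
  exact hcases
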